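/- Let X be a d-dimensional simplicial complex on n vertices, d ≥ 2. Then the torsion subgroup of H_{d-1}(X; ℤ) has order at most (d+1)^{(1/2)·C(n,d)}, i.e., at most √(d+1) raised to the power binomial(n, d). -/

import Mathlib

open Matrix

/-- Cells on vertex set `Fin n` of cardinality `c` (i.e. simplices of dimension `c - 1`). -/
abbrev Cell (n c : ℕ) := {s : Finset (Fin n) // s.card = c}

/-- The simplicial boundary matrix, from chains on cells of cardinality `c+1`
(dimension `c`) to chains on cells of cardinality `c` (dimension `c-1`).
Cardinality `0` cells (the empty set) give the augmentation (reduced homology). -/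
def bmat (R : Type) [CommRing R] (n c : ℕ) : Matrix (Cell n c) (Cell n (c + 1)) R :=
  fun t s => ∑ v ∈ s.1, if s.1.erase v = t.1 then (-1 : R) ^ (s.1.filter (· < v)).card else 0

/-- Cycles of dimension `c` (cardinality `c+1`), for a complex on `[n]` with complete
`(d-1)`-skeleton where `d = c+1`. -/
def cyclesC (R : Type) [CommRing R] (n c : ℕ) : Submodule R (Cell n (c + 1) → R) :=
  LinearMap.ker (bmat R n c).mulVecLin

/-- Boundaries of dimension `c`, for the complex on `[n]` with complete `(d-1)`-skeleton
(`d = c+1`) whose set of `d`-dimensional faces is `F`. -/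
def bdriesC (R : Type) [CommRing R] (n c : ℕ) (F : Finset (Cell n (c + 2))) :
    Submodule R (Cell n (c + 1) → R) :=
  LinearMap.range ((bmat R n (c + 1)).submatrix id (fun f : ↥F => f.1)).mulVecLin

/-- Simplicial homology `H_c(Y; R) = H_{d-1}(Y; R)` (`d = c+1`) of the `d`-dimensional
complex `Y` on `[n]` with complete `(d-1)`-skeleton and `d`-faces `F`. -/
abbrev HomC (R : Type) [CommRing R] (n c : ℕ) (F : Finset (Cell n (c + 2))) :=
  ↥(cyclesC R n c) ⧸ (bdriesC R n c F).comap (cyclesC R n c).subtype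

/-- The `q`-reducing set of the complex with complete `(d-1)`-skeleton and `d`-faces `F`
(`d = c+1`): those `d`-faces whose addition changes `H_{d-1}(·; ℤ/qℤ)`. -/
def qRed (q : ℕ) [Fact q.Prime] (n c : ℕ) (F : Finset (Cell n (c + 2))) :
    Set (Cell n (c + 2)) :=
  {f | Module.finrank (ZMod q) (HomC (ZMod q) n c (insert f F)) ≠
       Module.finrank (ZMod q) (HomC (ZMod q) n c F)}

/-- Cycles of dimension `c` of a general complex with `c`-dimensional faces `G`. -/
def cyclesG (R : Type) [CommRing R] (n c : ℕ) (G : Finset (Cell n (c + 1))) :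
    Submodule R (↥G → R) :=
  LinearMap.ker ((bmat R n c).submatrix id (fun g : ↥G => g.1)).mulVecLin

/-- Boundaries of dimension `c` of a general complex with `c`-dimensional faces `G` and
`(c+1)`-dimensional faces `F`. -/
def bdriesG (R : Type) [CommRing R] (n c : ℕ) (G : Finset (Cell n (c + 1)))
    (F : Finset (Cell n (c + 2))) : Submodule R (↥G → R) :=
  LinearMap.range ((bmat R n (c + 1)).submatrix (fun g : ↥G => g.1) (fun f : ↥F => f.1)).mulVecLin

/-- Simplicial homology `H_c(X; R)` of a general complex `X` with `c`-dimensional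
faces `G` and `(c+1)`-dimensional faces `F`. -/
abbrev HomG (R : Type) [CommRing R] (n c : ℕ) (G : Finset (Cell n (c + 1)))
    (F : Finset (Cell n (c + 2))) :=
  ↥(cyclesG R n c G) ⧸ (bdriesG R n c G F).comap (cyclesG R n c G).subtype

/-!
Let `B` be a lattice in `ℤ ^ ι` spanned by vectors of length at most `r`; in the application these
are the columns of `∂_d`, with `r = √(d + 1)`. The homology group embeds in `ℤ ^ ι / B`. Replacing
`B` by the span of a maximal linearly independent subfamily of its generators can only enlarge the
torsion of this quotient. Now complete that subfamily by unit vectors to a family spanning a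
lattice `U` of full rank. As `U / B` is free, the torsion of `ℤ ^ ι / B` embeds in `ℤ ^ ι / U`,
whose order is a determinant. By Hadamard's inequality that determinant is at most `r ^ rank B`,
since the unit vectors contribute factors `1`.
-/

open Module Submodule

section Torsion

variable {R M N : Type*} [CommRing R] [AddCommGroup M] [Module R M] [AddCommGroup N] [Module R N]

theorem torsion_le_comap_torsion (f : M →ₗ[R] N) : torsion R M ≤ (torsion R N).comap f := by
  rintro x ⟨a, hax⟩
  exact ⟨a, by rw [← f.map_smul_of_tower, hax, map_zero]⟩

theorem comap_torsion_eq_torsion_of_ker_le {f : M →ₗ[R] N} (hf : LinearMap.ker f ≤ torsion R M) :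
    (torsion R N).comap f = torsion R M := by
  refine le_antisymm ?_ (torsion_le_comap_torsion f)
  rintro x ⟨a, hax⟩
  obtain ⟨b, hbx⟩ : a • x ∈ torsion R M := hf (by rw [LinearMap.mem_ker, f.map_smul_of_tower, hax])
  exact ⟨b * a, by rw [mul_smul, hbx]⟩

theorem card_torsion_le_of_disjoint_ker [Finite (torsion R N)] {f : M →ₗ[R] N}
    (hf : Disjoint (torsion R M) (LinearMap.ker f)) :
    Nat.card (torsion R M) ≤ Nat.card (torsion R N) :=
  Nat.card_le_card_of_injective (f.restrict (torsion_le_comap_torsion f)) <| by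
    rw [← LinearMap.ker_eq_bot, LinearMap.ker_restrict]
    exact disjoint_iff_comap_eq_bot.mp hf

theorem card_torsion_le_of_ker_le_torsion [Finite (torsion R M)] {f : M →ₗ[R] N}
    (hf : Function.Surjective f) (hker : LinearMap.ker f ≤ torsion R M) :
    Nat.card (torsion R N) ≤ Nat.card (torsion R M) := by
  refine Nat.card_le_card_of_surjective (f.restrict (torsion_le_comap_torsion f)) ?_
  rintro ⟨y, hy⟩
  obtain ⟨x, rfl⟩ := hf y
  exact ⟨⟨x, (comap_torsion_eq_torsion_of_ker_le hker).le hy⟩, rfl⟩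

theorem card_torsion_quotient_comap_subtype_le (p q : Submodule R M)
    [Finite (torsion R (M ⧸ q))] :
    Nat.card (torsion R (p ⧸ q.comap p.subtype)) ≤ Nat.card (torsion R (M ⧸ q)) := by
  refine card_torsion_le_of_disjoint_ker (f := mapQ (q.comap p.subtype) q p.subtype le_rfl) ?_
  rw [ker_mapQ, mkQ_map_self]
  exact disjoint_bot_right

theorem disjoint_torsion_span_range [IsDomain R] {ι : Type*} {v : ι → M}
    (hv : LinearIndependent R v) : Disjoint (torsion R M) (span R (Set.range v)) := by
  have : Module.Free R (span R (Set.range v)) := .of_basis (Basis.span hv)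
  refine disjoint_def.mpr ?_
  rintro x ⟨a, hax⟩ hx
  have hx_zero : (⟨x, hx⟩ : span R (Set.range v)) = 0 :=
    (smul_eq_zero_iff_right (nonZeroDivisors.ne_zero a.2)).mp (Subtype.ext hax)
  exact congrArg Subtype.val hx_zero

/-- The saturation of a submodule `p`: the elements of which some multiple by a non-zero-divisor
lies in `p`, encoded as the preimage of the torsion of `M ⧸ p`. For `p ≤ q`, the condition
`q ≤ saturation p` says that `q` modulo `p` is torsion, so that `p` and `q` have the same rank. -/
def saturation (p : Submodule R M) : Submodule R M :=
  (torsion R (M ⧸ p)).comap p.mkQ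

theorem mem_saturation {p : Submodule R M} {x : M} :
    x ∈ saturation p ↔ ∃ a ∈ nonZeroDivisors R, a • x ∈ p := by
  simp only [saturation, mem_comap, mem_torsion_iff, mkQ_apply, Subtype.exists, exists_prop,
    Submonoid.mk_smul, ← Submodule.Quotient.mk_smul, Submodule.Quotient.mk_eq_zero]

theorem le_saturation (p : Submodule R M) : p ≤ saturation p := fun x hx =>
  mem_saturation.mpr ⟨1, one_mem _, by rwa [one_smul]⟩

theorem ker_factor_le_torsion {p q : Submodule R M} (hpq : p ≤ q) (hq : q ≤ saturation p) :
    LinearMap.ker (factor hpq) ≤ torsion R (M ⧸ p) := by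
  rw [factor, ker_mapQ, comap_id]
  exact map_le_iff_le_comap.mpr hq

theorem card_torsion_quotient_le_of_le_saturation {p q : Submodule R M} [Finite (torsion R (M ⧸ p))]
    (hpq : p ≤ q) (hq : q ≤ saturation p) :
    Nat.card (torsion R (M ⧸ q)) ≤ Nat.card (torsion R (M ⧸ p)) :=
  card_torsion_le_of_ker_le_torsion (factor_surjective hpq) (ker_factor_le_torsion hpq hq)

theorem finrank_eq_of_le_saturation [IsDomain R] [Module.Finite R M] {p q : Submodule R M}
    (hpq : p ≤ q) (hq : q ≤ saturation p) : finrank R q = finrank R p := by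
  have hquot : finrank R (M ⧸ q) = finrank R (M ⧸ p) := by
    rw [← (quotientQuotientEquivQuotient p q hpq).finrank_eq]
    exact finrank_quotient_eq_of_le_torsion (map_le_iff_le_comap.mpr hq)
  have hrank_p := finrank_quotient_add_finrank p
  have hrank_q := finrank_quotient_add_finrank q
  omega

theorem exists_linearIndepOn_span_range_le_saturation [IsDomain R] {ι : Type*} (v : ι → M) :
    ∃ s : Set ι, LinearIndepOn R v s ∧ span R (Set.range v) ≤ saturation (span R (v '' s)) := by
  obtain ⟨s, hs, hmax⟩ := exists_maximal_linearIndepOn R v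
  refine ⟨s, hs, span_le.mpr ?_⟩
  rintro _ ⟨i, rfl⟩
  by_cases hi : i ∈ s
  · exact le_saturation _ (subset_span ⟨i, hi, rfl⟩)
  · obtain ⟨a, ha, hai⟩ := hmax i hi
    exact mem_saturation.mpr ⟨a, mem_nonZeroDivisors_of_ne_zero ha, hai⟩

theorem exists_linearIndependent_sumElim_basis [IsDomain R] {ι κ : Type*} [Finite ι]
    {v : κ → M} (hv : LinearIndependent R v) (b : Basis ι R M) :
    ∃ s : Set ι, LinearIndependent R (Sum.elim v fun i : s => b i) ∧
      Nat.card (κ ⊕ s) = Nat.card ι := by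
  have := Module.Finite.of_basis b
  have := hv.finite
  let p := span R (Set.range v)
  obtain ⟨s, hs, hsat⟩ := exists_linearIndepOn_span_range_le_saturation (R := R) (p.mkQ ∘ b)
  refine ⟨s, (linearIndependent_span hv).sumElim_of_quotient _ hs, ?_⟩
  have hspan : span R (Set.range (p.mkQ ∘ b)) = ⊤ := by
    rw [Set.range_comp, ← map_span, b.span_eq, Submodule.map_top, range_mkQ]
  have hp : finrank R p = Nat.card κ := by
    have := Fintype.ofFinite κ
    rw [finrank_span_eq_card hv, Nat.card_eq_fintype_card]
  have hs_card : finrank R (M ⧸ p) = Nat.card s := by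
    have := Fintype.ofFinite s
    rw [← finrank_top, ← hspan, finrank_eq_of_le_saturation
      (span_mono (Set.image_subset_range _ s)) hsat, Set.image_eq_range]
    exact (finrank_span_eq_card hs).trans Nat.card_eq_fintype_card.symm
  rw [Nat.card_sum, ← hp, ← hs_card, add_comm, finrank_quotient_add_finrank,
    finrank_eq_nat_card_basis b]

theorem disjoint_torsion_map_mkQ_span_sumElim [IsDomain R] {ι κ : Type*} {v : κ → M} {w : ι → M}
    (h : LinearIndependent R (Sum.elim v w)) :
    Disjoint (torsion R (M ⧸ span R (Set.range v)))
      ((span R (Set.range (Sum.elim v w))).map (span R (Set.range v)).mkQ) := by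
  obtain ⟨-, hw, hvw⟩ := linearIndependent_sum.mp h
  have hmk : LinearIndependent R ((span R (Set.range v)).mkQ ∘ w) :=
    hw.map (by rw [ker_mkQ]; exact hvw.symm)
  have hmap : (span R (Set.range (Sum.elim v w))).map (span R (Set.range v)).mkQ =
      span R (Set.range ((span R (Set.range v)).mkQ ∘ w)) := by
    rw [Set.Sum.elim_range, span_union, Submodule.map_sup, mkQ_map_self, bot_sup_eq, map_span,
      Set.range_comp]
  rw [hmap]
  exact disjoint_torsion_span_range hmk

theorem card_torsion_quotient_span_le_of_sumElim [IsDomain R] {ι κ : Type*} {v : κ → M} {w : ι → M}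
    [Finite (torsion R (M ⧸ span R (Set.range (Sum.elim v w))))]
    (h : LinearIndependent R (Sum.elim v w)) :
    Nat.card (torsion R (M ⧸ span R (Set.range v))) ≤
      Nat.card (torsion R (M ⧸ span R (Set.range (Sum.elim v w)))) := by
  have hle : span R (Set.range v) ≤ span R (Set.range (Sum.elim v w)) :=
    span_mono (by rw [Set.Sum.elim_range]; exact Set.subset_union_left)
  refine card_torsion_le_of_disjoint_ker (f := factor hle) ?_
  rw [factor, ker_mapQ, comap_id]
  exact disjoint_torsion_map_mkQ_span_sumElim h

instance finite_torsion_int {M : Type*} [AddCommGroup M] [Module ℤ M] [Module.Finite ℤ M] :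
    Finite (torsion ℤ M) :=
  @finite_of_fg_torsion _ _ (torsion ℤ M).module _ torsion_isTorsion

end Torsion

section Determinant

variable {ι : Type*} [Fintype ι] [DecidableEq ι]

theorem abs_det_le_prod_norm {E : Type*} [NormedAddCommGroup E] [InnerProductSpace ℝ E]
    (b : OrthonormalBasis ι ℝ E) (v : ι → E) : |b.toBasis.det v| ≤ ∏ i, ‖v i‖ := by
  let e := Fintype.equivFin ι
  have : Fact (finrank ℝ E = Fintype.card ι) := ⟨finrank_eq_card_basis b.toBasis⟩
  have hle := (b.reindex e).toBasis.orientation.abs_volumeForm_apply_le (v ∘ e.symm)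
  rw [Orientation.volumeForm_robust' _ (b.reindex e), OrthonormalBasis.reindex_toBasis,
    Basis.det_reindex, Function.comp_assoc, e.symm_comp_self, Function.comp_id] at hle
  exact hle.trans_eq (e.symm.prod_comp fun i => ‖v i‖)

theorem abs_det_le_prod_sqrt_sum_sq (A : Matrix ι ι ℝ) :
    |A.det| ≤ ∏ i, √(∑ j, A i j ^ 2) := by
  let rows : ι → EuclideanSpace ℝ ι := fun i => WithLp.toLp 2 (A i)
  have hdet : (EuclideanSpace.basisFun ι ℝ).toBasis.det rows = A.det := by
    rw [Basis.det_apply, ← Matrix.det_transpose]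
    rfl
  have hle := abs_det_le_prod_norm (EuclideanSpace.basisFun ι ℝ) rows
  simpa only [hdet, rows, EuclideanSpace.norm_eq, Real.norm_eq_abs, sq_abs] using hle

theorem natAbs_det_le_prod_sqrt_sum_sq (A : Matrix ι ι ℤ) :
    (A.det.natAbs : ℝ) ≤ ∏ i, √(∑ j, (A i j : ℝ) ^ 2) := by
  have hle := abs_det_le_prod_sqrt_sum_sq (A.map (Int.castRingHom ℝ))
  rw [← RingHom.mapMatrix_apply, ← RingHom.map_det] at hle
  rwa [Nat.cast_natAbs, Int.cast_abs]

theorem card_quotient_span_range_row {A : Matrix ι ι ℤ} (hA : LinearIndependent ℤ A.row) :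
    Nat.card ((ι → ℤ) ⧸ span ℤ (Set.range A.row)) = A.det.natAbs := by
  rw [← natAbs_det_basis_change (Pi.basisFun ℤ ι) _ (Basis.span hA), Basis.det_apply,
    ← Matrix.det_transpose]
  congr 2
  ext i j
  simp [Basis.toMatrix_apply, Basis.span_apply]

end Determinant

section IntegerLattice

variable {ι κ : Type*} [Fintype ι]

theorem card_quotient_span_range_le_prod_sqrt [Fintype κ] {v : κ → ι → ℤ}
    (hv : LinearIndependent ℤ v) (e : ι ≃ κ) :
    (Nat.card ((ι → ℤ) ⧸ span ℤ (Set.range v)) : ℝ) ≤ ∏ k, √(∑ i, (v k i : ℝ) ^ 2) := by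
  classical
  let A : Matrix ι ι ℤ := Matrix.of (v ∘ e)
  have hA : LinearIndependent ℤ A.row := hv.comp e e.injective
  calc (Nat.card ((ι → ℤ) ⧸ span ℤ (Set.range v)) : ℝ)
      = Nat.card ((ι → ℤ) ⧸ span ℤ (Set.range A.row)) := by
        rw [← e.surjective.range_comp v]
        rfl
    _ = A.det.natAbs := by rw [card_quotient_span_range_row hA]
    _ ≤ ∏ i, √(∑ j, (A i j : ℝ) ^ 2) := natAbs_det_le_prod_sqrt_sum_sq A
    _ = ∏ k, √(∑ i, (v k i : ℝ) ^ 2) := e.prod_comp fun k => √(∑ i, (v k i : ℝ) ^ 2)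

theorem card_torsion_quotient_span_range_le_prod_sqrt [Fintype κ] {v : κ → ι → ℤ}
    (hv : LinearIndependent ℤ v) :
    (Nat.card (torsion ℤ ((ι → ℤ) ⧸ span ℤ (Set.range v))) : ℝ) ≤
      ∏ k, √(∑ i, (v k i : ℝ) ^ 2) := by
  classical
  obtain ⟨s, hs, hcard⟩ := exists_linearIndependent_sumElim_basis hv (Pi.basisFun ℤ ι)
  let u : κ ⊕ s → ι → ℤ := Sum.elim v fun i => Pi.basisFun ℤ ι i
  obtain ⟨e⟩ := Finite.card_eq.mp hcard.symm
  have := Fintype.ofFinite s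
  have : Finite ((ι → ℤ) ⧸ span ℤ (Set.range u)) := finiteQuotientOfFreeOfRankEq _ <| by
    rw [finrank_span_eq_card hs, ← Nat.card_eq_fintype_card, hcard, finrank_pi,
      Nat.card_eq_fintype_card]
  calc (Nat.card (torsion ℤ ((ι → ℤ) ⧸ span ℤ (Set.range v))) : ℝ)
      ≤ Nat.card (torsion ℤ ((ι → ℤ) ⧸ span ℤ (Set.range u))) := by
        exact_mod_cast card_torsion_quotient_span_le_of_sumElim hs
    _ ≤ Nat.card ((ι → ℤ) ⧸ span ℤ (Set.range u)) := by
        exact_mod_cast Finite.card_subtype_le _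
    _ ≤ ∏ k, √(∑ i, (u k i : ℝ) ^ 2) := card_quotient_span_range_le_prod_sqrt hs e
    _ = ∏ k, √(∑ i, (v k i : ℝ) ^ 2) := by
        simp [u, Fintype.prod_sum_type, Pi.single_apply]

theorem card_torsion_quotient_span_range_le_pow (v : κ → ι → ℤ) {r : ℝ}
    (hr : ∀ k, √(∑ i, (v k i : ℝ) ^ 2) ≤ r) :
    (Nat.card (torsion ℤ ((ι → ℤ) ⧸ span ℤ (Set.range v))) : ℝ) ≤
      r ^ finrank ℤ (span ℤ (Set.range v)) := by
  obtain ⟨s, hs, hsat⟩ := exists_linearIndepOn_span_range_le_saturation (R := ℤ) v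
  have hle : span ℤ (v '' s) ≤ span ℤ (Set.range v) := span_mono (Set.image_subset_range v s)
  have := hs.finite
  have := Fintype.ofFinite s
  have hcard : finrank ℤ (span ℤ (Set.range v)) = Fintype.card s := by
    rw [finrank_eq_of_le_saturation hle hsat, Set.image_eq_range]
    exact finrank_span_eq_card hs
  calc (Nat.card (torsion ℤ ((ι → ℤ) ⧸ span ℤ (Set.range v))) : ℝ)
      ≤ Nat.card (torsion ℤ ((ι → ℤ) ⧸ span ℤ (v '' s))) := by
        exact_mod_cast card_torsion_quotient_le_of_le_saturation hle hsat
    _ ≤ ∏ k : s, √(∑ i, (v k i : ℝ) ^ 2) := by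
        rw [Set.image_eq_range]
        exact card_torsion_quotient_span_range_le_prod_sqrt hs
    _ ≤ ∏ _k : s, r := Finset.prod_le_prod (fun _ _ => Real.sqrt_nonneg _) fun k _ => hr k
    _ = r ^ finrank ℤ (span ℤ (Set.range v)) := by rw [hcard, Finset.prod_const, Finset.card_univ]

end IntegerLattice

section BoundaryMatrix

variable {n c : ℕ}

/-- The facet of `s` opposite to the vertex `v`. As `v` varies, these index the nonzero entries of
the column of `bmat` at `s`. -/
def facet (s : Cell n (c + 1)) (v : s.1) : Cell n c :=
  ⟨s.1.erase v, by rw [Finset.card_erase_of_mem v.2, s.2, Nat.add_sub_cancel]⟩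

theorem facet_injective (s : Cell n (c + 1)) : Function.Injective (facet s) := fun v w h =>
  Subtype.ext (Finset.erase_injOn _ v.2 w.2 (congrArg Subtype.val h))

variable (R : Type) [CommRing R]

theorem bmat_eq_sum_facet (t : Cell n c) (s : Cell n (c + 1)) :
    bmat R n c t s =
      ∑ v : s.1, if facet s v = t then (-1 : R) ^ (s.1.filter (· < (v : Fin n))).card else 0 := by
  rw [bmat, ← Finset.sum_coe_sort]
  simp only [facet, Subtype.ext_iff]

theorem bmat_facet (s : Cell n (c + 1)) (v : s.1) :
    bmat R n c (facet s v) s = (-1) ^ (s.1.filter (· < (v : Fin n))).card := by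
  simp only [bmat_eq_sum_facet, (facet_injective s).eq_iff, Finset.sum_ite_eq', Finset.mem_univ,
    if_true]

theorem bmat_eq_zero_of_notMem_range_facet {t : Cell n c} {s : Cell n (c + 1)}
    (h : t ∉ Set.range (facet s)) : bmat R n c t s = 0 := by
  rw [bmat_eq_sum_facet]
  exact Finset.sum_eq_zero fun v _ => if_neg fun hv => h ⟨v, hv⟩

theorem sum_sq_bmat (s : Cell n (c + 1)) : ∑ t, bmat R n c t s ^ 2 = (c + 1 : ℕ) := by
  calc ∑ t, bmat R n c t s ^ 2
      = ∑ v : s.1, bmat R n c (facet s v) s ^ 2 :=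
        (Fintype.sum_of_injective _ (facet_injective s) _ _
          (fun t ht => by rw [bmat_eq_zero_of_notMem_range_facet R ht, zero_pow two_ne_zero])
          fun _ => rfl).symm
    _ = ∑ _v : s.1, 1 := by simp only [bmat_facet, pow_right_comm _ _ 2, neg_one_sq, one_pow]
    _ = (c + 1 : ℕ) := by simp [s.2]

theorem sum_sq_bmat_le (G : Finset (Cell n c)) (s : Cell n (c + 1)) :
    ∑ g : G, (bmat ℤ n c g s : ℝ) ^ 2 ≤ (c + 1 : ℕ) := by
  calc ∑ g : G, (bmat ℤ n c g s : ℝ) ^ 2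
      ≤ ∑ t, (bmat ℤ n c t s : ℝ) ^ 2 := by
        rw [Finset.sum_coe_sort G fun t => (bmat ℤ n c t s : ℝ) ^ 2]
        exact Finset.sum_le_univ_sum_of_nonneg fun _ => sq_nonneg _
    _ = (c + 1 : ℕ) := mod_cast sum_sq_bmat ℤ s

end BoundaryMatrix

section Boundaries

variable (R : Type) [CommRing R] {n c : ℕ}
  (G : Finset (Cell n (c + 1))) (F : Finset (Cell n (c + 2)))

theorem bdriesG_eq_span_range : bdriesG R n c G F =
    span R (Set.range fun (f : F) (g : G) => bmat R n (c + 1) g f) := by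
  rw [bdriesG, Matrix.range_mulVecLin]
  rfl

theorem finrank_bdriesG_le [Nontrivial R] : finrank R (bdriesG R n c G F) ≤ n.choose (c + 1) := by
  calc finrank R (bdriesG R n c G F)
      ≤ finrank R (G → R) := Submodule.finrank_le _
    _ = G.card := by rw [finrank_pi, Fintype.card_coe]
    _ ≤ Fintype.card (Cell n (c + 1)) := Finset.card_le_univ G
    _ = n.choose (c + 1) := by rw [Fintype.card_finset_len, Fintype.card_fin]

end Boundaries

theorem torsion_homology_le_general (n c : ℕ)
    (G : Finset (Cell n (c + 1))) (F : Finset (Cell n (c + 2))) :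
    (Nat.card (torsion ℤ (HomG ℤ n c G F)) : ℝ) ≤
      √((c + 1 : ℕ) + 1) ^ finrank ℤ (bdriesG ℤ n c G F) := by
  have hcolumn (f : F) : √(∑ g : G, (bmat ℤ n (c + 1) g f : ℝ) ^ 2) ≤ √((c + 1 : ℕ) + 1) :=
    Real.sqrt_le_sqrt ((sum_sq_bmat_le G f.1).trans_eq (Nat.cast_succ _))
  calc (Nat.card (torsion ℤ (HomG ℤ n c G F)) : ℝ)
      ≤ Nat.card (torsion ℤ ((G → ℤ) ⧸ bdriesG ℤ n c G F)) :=
        mod_cast card_torsion_quotient_comap_subtype_le (cyclesG ℤ n c G) (bdriesG ℤ n c G F)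
    _ ≤ √((c + 1 : ℕ) + 1) ^ finrank ℤ (bdriesG ℤ n c G F) := by
        rw [bdriesG_eq_span_range]
        exact card_torsion_quotient_span_range_le_pow _ hcolumn

/-- Let `X` be a `d`-dimensional simplicial complex on `n` vertices, `d ≥ 2`
(here `d = c + 1`, the `(d-1)`-faces of `X` are `G` and the `d`-faces are `F`).
Then the torsion subgroup of `H_{d-1}(X; ℤ)` has order at most `√(d+1) ^ (n choose d)`. -/
theorem torsion_homology_le (n c : ℕ) (hd : 2 ≤ c + 1)
    (G : Finset (Cell n (c + 1))) (F : Finset (Cell n (c + 2)))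
    (hclosed : ∀ f ∈ F, ∀ t : Cell n (c + 1), t.1 ⊆ f.1 → t ∈ G) :
    (Nat.card ↥(Submodule.torsion ℤ (HomG ℤ n c G F)) : ℝ) ≤
      Real.sqrt ((c + 1 : ℕ) + 1) ^ (n.choose (c + 1)) := by
  have hone_le : 1 ≤ √((c + 1 : ℕ) + 1) :=
    Real.one_le_sqrt.mpr (le_add_of_nonneg_left (Nat.cast_nonneg _))
  exact (torsion_homology_le_general n c G F).trans
    (pow_le_pow_right₀ hone_le (finrank_bdriesG_le ℤ G F))
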